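/- arXiv:1810.09129 — 2 statements merged into one kernel-verified Lean document; each statement's English description precedes it below -/
import Mathlib

section
/- Let L be a non-abelian nilpotent Lie superalgebra of total dimension 2 over a field of characteristic ≠ 2,3. Then L is isomorphic to H(0,1), the Lie superalgebra with even basis {z}, odd basis {y}, and the only nonzero bracket [y,y] = z. -/
open Module Function TensorProduct

/-- A Lie superalgebra over a field `K`, encoded via a grading involution `J`
(the even part is the `+1`-eigenspace, the odd part the `-1`-eigenspace),
a bilinear bracket `br` satisfying graded skew-symmetry and the graded
Jacobi identity on homogeneous elements. -/
structure SuperLie (K : Type) [Field K] : Type 1 where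
  carrier : Type
  [acg : AddCommGroup carrier]
  [mod : Module K carrier]
  J : carrier →ₗ[K] carrier
  br : carrier →ₗ[K] carrier →ₗ[K] carrier
  J_inv : ∀ x, J (J x) = x
  J_br : ∀ x y, J (br x y) = br (J x) (J y)
  skew_e : ∀ x y, J x = x → br x y = - br y x
  skew_o : ∀ x y, J x = -x → J y = -y → br x y = br y x
  jacobi : ∀ (a b c : Bool) (x y z : carrier),
    J x = (if a then -x else x) → J y = (if b then -y else y) →
    J z = (if c then -z else z) →
    (if a && c then (-1 : K) else 1) • br x (br y z)
      + (if b && a then (-1 : K) else 1) • br y (br z x)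
      + (if c && b then (-1 : K) else 1) • br z (br x y) = 0

attribute [instance] SuperLie.acg SuperLie.mod

namespace SuperLie

variable {K : Type} [Field K]

/-- The even part `L₀`. -/
def evenPart (A : SuperLie K) : Submodule K A.carrier :=
  LinearMap.ker (A.J - LinearMap.id)

/-- The odd part `L₁`. -/
def oddPart (A : SuperLie K) : Submodule K A.carrier :=
  LinearMap.ker (A.J + LinearMap.id)

/-- The center `Z(L) = {z | [z,x] = 0 for all x}`. -/
def center (A : SuperLie K) : Submodule K A.carrier :=
  ⨅ y, LinearMap.ker (A.br.flip y)

/-- The derived subalgebra `L' = [L,L]`. -/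
def derived (A : SuperLie K) : Submodule K A.carrier :=
  Submodule.span K {z | ∃ x y, A.br x y = z}

/-- The descending central series `C⁰(L) = L`, `C^{k+1}(L) = [C^k(L), L]`. -/
def lcs (A : SuperLie K) : ℕ → Submodule K A.carrier
  | 0 => ⊤
  | (k+1) => Submodule.span K {z | ∃ x ∈ lcs A k, ∃ y, A.br x y = z}

/-- The second center `Z₂(L)`: those `x` with `[x,y] ∈ Z(L)` for all `y`. -/
def Z2 (A : SuperLie K) : Submodule K A.carrier :=
  ⨅ y, Submodule.comap (A.br.flip y) A.center

/-- Nilpotency: the descending central series terminates at zero. -/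
def IsNilpotent (A : SuperLie K) : Prop := ∃ k, A.lcs k = ⊥

/-- Abelian: identically vanishing bracket. -/
def IsAbelian (A : SuperLie K) : Prop := ∀ x y, A.br x y = 0

/-- A homomorphism of Lie superalgebras: an even linear map commuting with the
grading and preserving brackets. -/
structure Hom (A B : SuperLie K) where
  toLin : A.carrier →ₗ[K] B.carrier
  map_J : ∀ x, toLin (A.J x) = B.J (toLin x)
  map_br : ∀ x y, toLin (A.br x y) = B.br (toLin x) (toLin y)

/-- The dimension of the Schur multiplier `M(A)`, characterized as the maximal
dimension of the kernel of a stem extension `0 → M → B → A → 0`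
(i.e. `M = ker f ⊆ Z(B) ∩ B'`); a stem extension of maximal dimension is a
stem cover, whose kernel is isomorphic to the Schur multiplier
`M(A) = ([F,F] ∩ R)/[F,R]` coming from any free presentation `0 → R → F → A → 0`. -/
noncomputable def multDim (A : SuperLie K) : ℕ :=
  sSup {d | ∃ (B : SuperLie K) (f : Hom B A),
    Surjective f.toLin ∧
    LinearMap.ker f.toLin ≤ B.center ⊓ B.derived ∧
    finrank K (LinearMap.ker f.toLin) = d}

/-- `A ≅ H(0,1)`: basis `z` (even), `y` (odd), `[y,y] = z`, `z` central. -/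
def IsH01 (A : SuperLie K) : Prop :=
  ∃ z y : A.carrier, z ∈ A.evenPart ∧ y ∈ A.oddPart ∧
    LinearIndependent K ![z, y] ∧
    Submodule.span K ({z, y} : Set A.carrier) = ⊤ ∧
    A.br y y = z ∧ z ∈ A.center

/-- `A ≅ H(1,0)`: the purely even 3-dimensional Heisenberg algebra. -/
def IsH10 (A : SuperLie K) : Prop :=
  ∃ x y z : A.carrier, x ∈ A.evenPart ∧ y ∈ A.evenPart ∧ z ∈ A.evenPart ∧
    LinearIndependent K ![x, y, z] ∧
    Submodule.span K ({x, y, z} : Set A.carrier) = ⊤ ∧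
    A.br x y = z ∧ z ∈ A.center

/-- `A ≅ H(0,2)`: even basis `{z}`, odd basis `{y₁,y₂}`, `[yᵢ,yᵢ] = z`. -/
def IsH02 (A : SuperLie K) : Prop :=
  ∃ z y₁ y₂ : A.carrier, z ∈ A.evenPart ∧ y₁ ∈ A.oddPart ∧ y₂ ∈ A.oddPart ∧
    LinearIndependent K ![z, y₁, y₂] ∧
    Submodule.span K ({z, y₁, y₂} : Set A.carrier) = ⊤ ∧
    A.br y₁ y₁ = z ∧ A.br y₂ y₂ = z ∧ A.br y₁ y₂ = 0 ∧ z ∈ A.center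

/-- `A ≅ H₁`: even basis `{x}`, odd basis `{y,z}`, `[x,y] = z`, `z` central. -/
def IsHodd1 (A : SuperLie K) : Prop :=
  ∃ x y z : A.carrier, x ∈ A.evenPart ∧ y ∈ A.oddPart ∧ z ∈ A.oddPart ∧
    LinearIndependent K ![x, y, z] ∧
    Submodule.span K ({x, y, z} : Set A.carrier) = ⊤ ∧
    A.br x y = z ∧ A.br y y = 0 ∧ z ∈ A.center

/-- `A ≅ H(p,q)`: the special Heisenberg Lie superalgebra with even center,
of superdimension `(2p+1 | q)`: even basis `x₁,…,x_{2p}, z` with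
`[xᵢ, x_{p+i}] = z`, odd basis `y₁,…,y_q` with `[yⱼ,yⱼ] = z`, `z` central. -/
def IsHeisEven (A : SuperLie K) (p q : ℕ) : Prop :=
  ∃ (x : Fin (2*p) → A.carrier) (y : Fin q → A.carrier) (z : A.carrier),
    (∀ i, x i ∈ A.evenPart) ∧ (∀ j, y j ∈ A.oddPart) ∧ z ∈ A.evenPart ∧
    LinearIndependent K (Sum.elim x (Sum.elim y (fun _ : Fin 1 => z))) ∧
    Submodule.span K (Set.range (Sum.elim x (Sum.elim y (fun _ : Fin 1 => z)))) = ⊤ ∧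
    (∀ i j : Fin (2*p), A.br (x i) (x j) =
      if (j : ℕ) = (i : ℕ) + p then z else if (i : ℕ) = (j : ℕ) + p then -z else 0) ∧
    (∀ i j : Fin q, A.br (y i) (y j) = if i = j then z else 0) ∧
    (∀ i j, A.br (x i) (y j) = 0) ∧ z ∈ A.center

/-- `A ≅ H_p`: the special Heisenberg Lie superalgebra with odd center, of
superdimension `(p | p+1)`: even basis `x₁,…,x_p`, odd basis `y₁,…,y_p, z`,
with `[xᵢ, yᵢ] = z` and `z` central. -/
def IsHeisOdd (A : SuperLie K) (p : ℕ) : Prop :=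
  ∃ (x : Fin p → A.carrier) (y : Fin p → A.carrier) (z : A.carrier),
    (∀ i, x i ∈ A.evenPart) ∧ (∀ j, y j ∈ A.oddPart) ∧ z ∈ A.oddPart ∧
    LinearIndependent K (Sum.elim x (Sum.elim y (fun _ : Fin 1 => z))) ∧
    Submodule.span K (Set.range (Sum.elim x (Sum.elim y (fun _ : Fin 1 => z)))) = ⊤ ∧
    (∀ i j : Fin p, A.br (x i) (x j) = 0) ∧
    (∀ i j : Fin p, A.br (y i) (y j) = 0) ∧
    (∀ i j : Fin p, A.br (x i) (y j) = if i = j then z else 0) ∧ z ∈ A.center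

/-- `A ≅ H(p,q) ⊕ A(a|b)`: direct sum of the special Heisenberg Lie
superalgebra with even center and an abelian superalgebra of superdimension
`(a|b)` (central basis vectors `u₁,…,u_a` even and `v₁,…,v_b` odd). -/
def IsHeisEvenSum (A : SuperLie K) (p q a b : ℕ) : Prop :=
  ∃ (x : Fin (2*p) → A.carrier) (y : Fin q → A.carrier) (z : A.carrier)
    (u : Fin a → A.carrier) (v : Fin b → A.carrier),
    (∀ i, x i ∈ A.evenPart) ∧ (∀ j, y j ∈ A.oddPart) ∧ z ∈ A.evenPart ∧
    (∀ i, u i ∈ A.evenPart) ∧ (∀ j, v j ∈ A.oddPart) ∧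
    LinearIndependent K
      (Sum.elim x (Sum.elim y (Sum.elim (fun _ : Fin 1 => z) (Sum.elim u v)))) ∧
    Submodule.span K (Set.range
      (Sum.elim x (Sum.elim y (Sum.elim (fun _ : Fin 1 => z) (Sum.elim u v))))) = ⊤ ∧
    (∀ i j : Fin (2*p), A.br (x i) (x j) =
      if (j : ℕ) = (i : ℕ) + p then z else if (i : ℕ) = (j : ℕ) + p then -z else 0) ∧
    (∀ i j : Fin q, A.br (y i) (y j) = if i = j then z else 0) ∧
    (∀ i j, A.br (x i) (y j) = 0) ∧ z ∈ A.center ∧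
    (∀ i, u i ∈ A.center) ∧ (∀ j, v j ∈ A.center)

/-- `A ≅ H_p ⊕ A(a|b)`: direct sum of the special Heisenberg Lie superalgebra
with odd center and an abelian superalgebra of superdimension `(a|b)`. -/
def IsHeisOddSum (A : SuperLie K) (p a b : ℕ) : Prop :=
  ∃ (x : Fin p → A.carrier) (y : Fin p → A.carrier) (z : A.carrier)
    (u : Fin a → A.carrier) (v : Fin b → A.carrier),
    (∀ i, x i ∈ A.evenPart) ∧ (∀ j, y j ∈ A.oddPart) ∧ z ∈ A.oddPart ∧
    (∀ i, u i ∈ A.evenPart) ∧ (∀ j, v j ∈ A.oddPart) ∧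
    LinearIndependent K
      (Sum.elim x (Sum.elim y (Sum.elim (fun _ : Fin 1 => z) (Sum.elim u v)))) ∧
    Submodule.span K (Set.range
      (Sum.elim x (Sum.elim y (Sum.elim (fun _ : Fin 1 => z) (Sum.elim u v))))) = ⊤ ∧
    (∀ i j : Fin p, A.br (x i) (x j) = 0) ∧
    (∀ i j : Fin p, A.br (y i) (y j) = 0) ∧
    (∀ i j : Fin p, A.br (x i) (y j) = if i = j then z else 0) ∧ z ∈ A.center ∧
    (∀ i, u i ∈ A.center) ∧ (∀ j, v j ∈ A.center)

/-- `A ≅ L_{4,0}`: purely even filiform algebra, basis `x,y,z,w`,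
`[x,y] = z`, `[y,z] = w`, all other basis brackets zero. -/
def IsL40 (A : SuperLie K) : Prop :=
  ∃ x y z w : A.carrier,
    x ∈ A.evenPart ∧ y ∈ A.evenPart ∧ z ∈ A.evenPart ∧ w ∈ A.evenPart ∧
    LinearIndependent K ![x, y, z, w] ∧
    Submodule.span K ({x, y, z, w} : Set A.carrier) = ⊤ ∧
    A.br x y = z ∧ A.br y z = w ∧ A.br x z = 0 ∧
    A.br x w = 0 ∧ A.br y w = 0 ∧ A.br z w = 0

/-- `A ≅ L_{5,0}^2`: purely even, basis `x,y,z,v,w`, `[x,y] = v`, `[y,z] = w`,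
with `v, w` central and all other basis brackets zero. -/
def IsL502 (A : SuperLie K) : Prop :=
  ∃ x y z v w : A.carrier,
    x ∈ A.evenPart ∧ y ∈ A.evenPart ∧ z ∈ A.evenPart ∧
    v ∈ A.evenPart ∧ w ∈ A.evenPart ∧
    LinearIndependent K ![x, y, z, v, w] ∧
    Submodule.span K ({x, y, z, v, w} : Set A.carrier) = ⊤ ∧
    A.br x y = v ∧ A.br y z = w ∧ A.br x z = 0 ∧
    v ∈ A.center ∧ w ∈ A.center

end SuperLie

open SuperLie

/-!
The lower central series of a nilpotent superalgebra is strictly decreasing until it vanishes, so in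
dimension 2 it has `lcs 2 = ⊥`: every bracket is central. In the non-abelian case the center is then
a line, complemented by the line of a homogeneous `y`. Away from characteristic 2 the center also
annihilates `y` from the right, so `[y, y] = 0` would make `y` central. Hence `[y, y]` is nonzero,
which forces `y` to be odd, and `[y, y], y` is the required basis.
-/

section Pair

variable {K V : Type*} [DivisionRing K] [AddCommGroup V] [Module K V]
  {N : Submodule K V} {z y : V}

theorem linearIndependent_pair_of_mem_of_notMem (hz : z ∈ N) (hz0 : z ≠ 0) (hy : y ∉ N) :
    LinearIndependent K ![z, y] :=
  (LinearIndependent.pair_iff' hz0).2 fun a h => hy (h ▸ N.smul_mem a hz)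

theorem span_pair_eq_top (h : LinearIndependent K ![z, y]) (hV : finrank K V = 2) :
    Submodule.span K {z, y} = ⊤ := by
  simpa only [Matrix.range_cons_cons_empty] using
    h.span_eq_top_of_card_eq_finrank (by rw [Fintype.card_fin, hV])

theorem sup_span_singleton_eq_top (hV : finrank K V = 2) (hN : N ≠ ⊥) (hy : y ∉ N) :
    N ⊔ Submodule.span K {y} = ⊤ := by
  obtain ⟨z, hz, hz0⟩ := N.ne_bot_iff.1 hN
  have hspan := span_pair_eq_top (linearIndependent_pair_of_mem_of_notMem hz hz0 hy) hV
  rw [← top_le_iff, ← hspan, Submodule.span_insert]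
  exact sup_le_sup_right ((Submodule.span_singleton_le_iff_mem _ _).2 hz) _

end Pair

namespace SuperLie

variable {K : Type} [Field K] {A : SuperLie K}

theorem mem_evenPart {x : A.carrier} : x ∈ A.evenPart ↔ A.J x = x := by
  simp only [evenPart, LinearMap.mem_ker, LinearMap.sub_apply, LinearMap.id_apply, sub_eq_zero]

theorem mem_oddPart {x : A.carrier} : x ∈ A.oddPart ↔ A.J x = -x := by
  simp only [oddPart, LinearMap.mem_ker, LinearMap.add_apply, LinearMap.id_apply,
    add_eq_zero_iff_eq_neg]

theorem mem_center {z : A.carrier} : z ∈ A.center ↔ ∀ x, A.br z x = 0 := by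
  simp only [center, Submodule.mem_iInf, LinearMap.mem_ker, LinearMap.flip_apply]

theorem br_mem_lcs_succ {k : ℕ} {x : A.carrier} (hx : x ∈ A.lcs k) (y : A.carrier) :
    A.br x y ∈ A.lcs (k + 1) :=
  Submodule.subset_span ⟨x, hx, y, rfl⟩

theorem lcs_succ_le_lcs_succ {k m : ℕ} (h : A.lcs k ≤ A.lcs m) :
    A.lcs (k + 1) ≤ A.lcs (m + 1) := by
  refine Submodule.span_le.2 ?_
  rintro _ ⟨x, hx, y, rfl⟩
  exact br_mem_lcs_succ (h hx) y

theorem lcs_succ_le (A : SuperLie K) : ∀ k, A.lcs (k + 1) ≤ A.lcs k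
  | 0 => le_top
  | k + 1 => lcs_succ_le_lcs_succ (lcs_succ_le A k)

theorem IsNilpotent.lcs_succ_lt (hA : A.IsNilpotent) {k : ℕ} (hk : A.lcs k ≠ ⊥) :
    A.lcs (k + 1) < A.lcs k := by
  refine (A.lcs_succ_le k).lt_of_not_ge fun hstat => hk ?_
  have hle : ∀ n, A.lcs k ≤ A.lcs n := fun n => by
    induction n with
    | zero => exact le_top
    | succ n ih => exact hstat.trans (lcs_succ_le_lcs_succ ih)
  obtain ⟨n, hn⟩ := hA
  exact le_bot_iff.1 (hn ▸ hle n)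

theorem IsNilpotent.finrank_lcs_add_le [FiniteDimensional K A.carrier] (hA : A.IsNilpotent) {k : ℕ}
    (hk : A.lcs k ≠ ⊥) : finrank K (A.lcs k) + k ≤ finrank K A.carrier := by
  induction k with
  | zero => exact Submodule.finrank_le _
  | succ k ih =>
    have hk' : A.lcs k ≠ ⊥ := ne_bot_of_le_ne_bot hk (A.lcs_succ_le k)
    have hlt := Submodule.finrank_lt_finrank_of_lt (hA.lcs_succ_lt hk')
    have hle := ih hk'
    omega

theorem IsNilpotent.lcs_eq_bot_of_finrank_le [FiniteDimensional K A.carrier] (hA : A.IsNilpotent)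
    {k : ℕ} (hk : finrank K A.carrier ≤ k) : A.lcs k = ⊥ := by
  by_contra h
  have hpos : 0 < finrank K (A.lcs k) := Nat.pos_of_ne_zero (mt Submodule.finrank_eq_zero.1 h)
  have hle := hA.finrank_lcs_add_le h
  omega

theorem lcs_le_center_of_lcs_succ_eq_bot {k : ℕ} (hk : A.lcs (k + 1) = ⊥) : A.lcs k ≤ A.center :=
  fun _ hx => mem_center.2 fun y => (Submodule.mem_bot K).1 (hk ▸ br_mem_lcs_succ hx y)

theorem IsNilpotent.br_mem_center_of_finrank_le_two [FiniteDimensional K A.carrier]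
    (hA : A.IsNilpotent) (hdim : finrank K A.carrier ≤ 2) (x y : A.carrier) :
    A.br x y ∈ A.center :=
  lcs_le_center_of_lcs_succ_eq_bot (hA.lcs_eq_bot_of_finrank_le hdim)
    (br_mem_lcs_succ (k := 0) Submodule.mem_top y)

theorem inf_evenPart_sup_inf_oddPart (h2 : (2 : K) ≠ 0) {N : Submodule K A.carrier}
    (hN : ∀ x ∈ N, A.J x ∈ N) : N ⊓ A.evenPart ⊔ N ⊓ A.oddPart = N := by
  refine le_antisymm (sup_le inf_le_left inf_le_left) fun x hx => ?_
  have heven : x + A.J x ∈ N ⊓ A.evenPart :=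
    ⟨N.add_mem hx (hN x hx), mem_evenPart.2 (by rw [map_add, A.J_inv, add_comm])⟩
  have hodd : x - A.J x ∈ N ⊓ A.oddPart :=
    ⟨N.sub_mem hx (hN x hx), mem_oddPart.2 (by rw [map_sub, A.J_inv, neg_sub])⟩
  have hsum : (2 : K) • x = (x + A.J x) + (x - A.J x) := by rw [two_smul]; abel
  rw [← Submodule.smul_mem_iff _ h2, hsum]
  exact Submodule.add_mem_sup heven hodd

theorem evenPart_sup_oddPart (h2 : (2 : K) ≠ 0) (A : SuperLie K) : A.evenPart ⊔ A.oddPart = ⊤ := by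
  simpa only [top_inf_eq] using
    inf_evenPart_sup_inf_oddPart (A := A) h2 (N := ⊤) fun _ _ => Submodule.mem_top

theorem exists_homogeneous_notMem (h2 : (2 : K) ≠ 0) {N : Submodule K A.carrier} (hN : N ≠ ⊤) :
    ∃ y ∉ N, y ∈ A.evenPart ∨ y ∈ A.oddPart := by
  by_contra! h
  refine hN (top_le_iff.1 ?_)
  rw [← evenPart_sup_oddPart h2]
  exact sup_le (fun y hy => by_contra fun hyN => (h y hyN).1 hy)
    fun y hy => by_contra fun hyN => (h y hyN).2 hy

theorem br_self_mem_evenPart {y : A.carrier} (hy : y ∈ A.oddPart) : A.br y y ∈ A.evenPart := by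
  rw [mem_evenPart, A.J_br, mem_oddPart.1 hy, LinearMap.map_neg₂, map_neg, neg_neg]

theorem br_self_eq_zero_of_mem_evenPart (h2 : (2 : K) ≠ 0) {x : A.carrier} (hx : x ∈ A.evenPart) :
    A.br x x = 0 := by
  have h : (2 : K) • A.br x x = 0 := by
    rw [two_smul, ← eq_neg_iff_add_eq_zero]
    exact A.skew_e x x (mem_evenPart.1 hx)
  exact (smul_eq_zero.1 h).resolve_left h2

theorem J_mem_center {z : A.carrier} (hz : z ∈ A.center) : A.J z ∈ A.center :=
  mem_center.2 fun x => by
    rw [← A.J_inv x, ← A.J_br, mem_center.1 hz, map_zero]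

theorem center_le_ker_br (h2 : (2 : K) ≠ 0) (x : A.carrier) :
    A.center ≤ LinearMap.ker (A.br x) := by
  rw [← inf_evenPart_sup_inf_oddPart h2 fun _ => J_mem_center (A := A)]
  refine sup_le ?_ ?_
  · rintro z ⟨hz, hz_even⟩
    rw [LinearMap.mem_ker, ← neg_eq_zero, ← A.skew_e z x (mem_evenPart.1 hz_even)]
    exact mem_center.1 hz x
  · rintro z ⟨hz, hz_odd⟩
    suffices h : A.evenPart ⊔ A.oddPart ≤ LinearMap.ker (A.br.flip z) from
      h (evenPart_sup_oddPart h2 A ▸ Submodule.mem_top)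
    refine sup_le (fun w hw => ?_) fun w hw => ?_
    · rw [LinearMap.mem_ker, LinearMap.flip_apply, A.skew_e w z (mem_evenPart.1 hw),
        mem_center.1 hz, neg_zero]
    · rw [LinearMap.mem_ker, LinearMap.flip_apply,
        A.skew_o w z (mem_oddPart.1 hw) (mem_oddPart.1 hz_odd), mem_center.1 hz]

theorem br_self_ne_zero_of_notMem_center (h2 : (2 : K) ≠ 0) {y : A.carrier} (hy : y ∉ A.center)
    (htop : A.center ⊔ Submodule.span K {y} = ⊤) : A.br y y ≠ 0 := by
  intro hyy
  have hker : A.center ⊔ Submodule.span K {y} ≤ LinearMap.ker (A.br y) :=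
    sup_le (center_le_ker_br h2 y) ((Submodule.span_singleton_le_iff_mem _ _).2 hyy)
  exact hy (mem_center.2 fun x => hker (htop ▸ Submodule.mem_top))

end SuperLie

theorem stmt7_general {K : Type} [Field K] (h2 : (2 : K) ≠ 0) (A : SuperLie K)
    (hnil : A.IsNilpotent) (hna : ¬ A.IsAbelian) (hdim : finrank K A.carrier = 2) :
    A.IsH01 := by
  have : FiniteDimensional K A.carrier := FiniteDimensional.of_finrank_eq_succ hdim
  have hcenter := hnil.br_mem_center_of_finrank_le_two hdim.le
  obtain ⟨u, v, huv⟩ : ∃ u v, A.br u v ≠ 0 := by simpa only [IsAbelian, not_forall] using hna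
  have hne_bot : A.center ≠ ⊥ := A.center.ne_bot_iff.2 ⟨_, hcenter u v, huv⟩
  have hne_top : A.center ≠ ⊤ := fun h => huv (mem_center.1 (h ▸ Submodule.mem_top) v)
  obtain ⟨y, hy, hy_hom⟩ := exists_homogeneous_notMem h2 hne_top
  have hyy : A.br y y ≠ 0 :=
    br_self_ne_zero_of_notMem_center h2 hy (sup_span_singleton_eq_top hdim hne_bot hy)
  have hy_odd : y ∈ A.oddPart :=
    hy_hom.resolve_left fun h => hyy (br_self_eq_zero_of_mem_evenPart h2 h)
  have hli : LinearIndependent K ![A.br y y, y] :=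
    linearIndependent_pair_of_mem_of_notMem (hcenter y y) hyy hy
  exact ⟨A.br y y, y, br_self_mem_evenPart hy_odd, hy_odd, hli, span_pair_eq_top hli hdim, rfl,
    hcenter y y⟩

/-- A non-abelian nilpotent Lie superalgebra of total dimension 2
is isomorphic to `H(0,1)`. -/
theorem stmt7 {K : Type} [Field K] (h2 : (2 : K) ≠ 0) (h3 : (3 : K) ≠ 0)
    (A : SuperLie K) [FiniteDimensional K A.carrier]
    (hnil : A.IsNilpotent) (hna : ¬ A.IsAbelian)
    (hdim : finrank K A.carrier = 2) :
    A.IsH01 :=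
  stmt7_general h2 A hnil hna hdim
end

section
/- Let L be a nilpotent Lie superalgebra of dimension (m | n) with dim L' = (0 | 1), over a field of characteristic ≠ 2,3. Then L ≅ H_p ⊕ A(m-p | n-p-1) for some p ≥ 1, where H_p is the special Heisenberg Lie superalgebra with odd center and A(r | s) is the abelian Lie superalgebra of dimension (r | s). -/
open Module Function TensorProduct

open SuperLie

/-!
The grading forces `[L₀, L₀]` and `[L₁, L₁]` into `L₀`, so they vanish when `L' = K z` is odd, and
`z` is central because an eigenvector of a bracket in a nilpotent algebra has eigenvalue `0`. Hence
the whole structure is a bilinear pairing `B : L₀ × L₁ → K` with `[e, o] = B(e, o) z`. Complements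
of the two radicals of `B` are in perfect duality, so dual bases of them are the `xᵢ`, `yᵢ` of `H_p`
with `p = rank B`; the radicals are the central elements of each parity, and the odd one contains
`z`.
-/

section LinearAlgebra

theorem isCompl_ker_sub_id_ker_add_id {R M : Type*} [Ring R] [Invertible (2 : R)] [AddCommGroup M]
    [Module R M] {σ : M →ₗ[R] M} (hσ : Involutive σ) :
    IsCompl (LinearMap.ker (σ - LinearMap.id)) (LinearMap.ker (σ + LinearMap.id)) := by
  have mem_fix (x : M) : x ∈ LinearMap.ker (σ - LinearMap.id) ↔ σ x = x := by simp [sub_eq_zero]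
  have mem_anti (x : M) : x ∈ LinearMap.ker (σ + LinearMap.id) ↔ σ x = -x := by
    simp [add_eq_zero_iff_eq_neg]
  refine ⟨Submodule.disjoint_def.2 fun x hfix hanti ↦ ?_,
    Submodule.codisjoint_iff_exists_add_eq.2 fun x ↦
      ⟨⅟(2 : R) • (x + σ x), ⅟(2 : R) • (x - σ x), ?_, ?_, ?_⟩⟩
  · have two_smul_eq_zero : (2 : R) • x = 0 := by
      rw [two_smul, ← eq_neg_iff_add_eq_zero, ← (mem_anti x).1 hanti, (mem_fix x).1 hfix]
    rw [← invOf_smul_smul (2 : R) x, two_smul_eq_zero, smul_zero]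
  · rw [mem_fix, map_smul, map_add, hσ x, add_comm]
  · rw [mem_anti, map_smul, map_sub, hσ x, ← smul_neg, neg_sub]
  · rw [← smul_add, add_add_sub_cancel, ← two_smul R x, invOf_smul_smul]

theorem separatingLeft_domRestrict₁₂ {R M N P : Type*} [CommRing R] [AddCommGroup M] [Module R M]
    [AddCommGroup N] [Module R N] [AddCommGroup P] [Module R P] {B : M →ₗ[R] N →ₗ[R] P}
    {C : Submodule R M} {D : Submodule R N} (hC : Disjoint C (LinearMap.ker B))
    (hD : Codisjoint D (LinearMap.ker B.flip)) : (B.domRestrict₁₂ C D).SeparatingLeft := by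
  intro c hc
  suffices B c = 0 from Subtype.ext (Submodule.disjoint_def.1 hC c c.2 this)
  ext y
  obtain ⟨d, r, hd, hr, rfl⟩ := Submodule.codisjoint_iff_exists_add_eq.1 hD y
  have hd0 : B c d = 0 := hc ⟨d, hd⟩
  have hr0 : B c r = 0 := LinearMap.congr_fun hr c
  rw [map_add, hd0, hr0, add_zero, LinearMap.zero_apply]

variable {K V E O ι κ : Type*} [Field K] [AddCommGroup V] [Module K V] [AddCommGroup E] [Module K E]
  [AddCommGroup O] [Module K O]

theorem isPerfPair_domRestrict₁₂ [FiniteDimensional K E] {B : E →ₗ[K] O →ₗ[K] K}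
    {C : Submodule K E} {D : Submodule K O} (hC : IsCompl C (LinearMap.ker B))
    (hD : IsCompl D (LinearMap.ker B.flip)) : (B.domRestrict₁₂ C D).IsPerfPair := by
  have hleft := separatingLeft_domRestrict₁₂ hC.disjoint hD.codisjoint
  have hright := separatingLeft_domRestrict₁₂ (B := B.flip) hD.disjoint hC.codisjoint
  exact .of_injective
    (LinearMap.ker_eq_bot.1 (LinearMap.separatingLeft_iff_ker_eq_bot.1 hleft))
    (LinearMap.ker_eq_bot.1 (LinearMap.separatingLeft_iff_ker_eq_bot.1 hright))

/-- The basis of a vector space obtained by concatenating bases of two complementary subspaces. -/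
noncomputable def basisSumOfIsCompl {P Q : Submodule K V} (h : IsCompl P Q) (bP : Basis ι K P)
    (bQ : Basis κ K Q) : Basis (ι ⊕ κ) K V :=
  (bP.prod bQ).map (Submodule.prodEquivOfIsCompl P Q h)

@[simp]
theorem basisSumOfIsCompl_inl {P Q : Submodule K V} (h : IsCompl P Q) (bP : Basis ι K P)
    (bQ : Basis κ K Q) (i : ι) : basisSumOfIsCompl h bP bQ (Sum.inl i) = bP i := by
  simp [basisSumOfIsCompl]

@[simp]
theorem basisSumOfIsCompl_inr {P Q : Submodule K V} (h : IsCompl P Q) (bP : Basis ι K P)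
    (bQ : Basis κ K Q) (j : κ) : basisSumOfIsCompl h bP bQ (Sum.inr j) = bQ j := by
  simp [basisSumOfIsCompl]

theorem exists_basis_sum_of_linearIndependent [FiniteDimensional K V] {v : ι → V}
    (hv : LinearIndependent K v) : ∃ (n : ℕ) (b : Basis (ι ⊕ Fin n) K V), b ∘ Sum.inl = v := by
  obtain ⟨Q, hQ⟩ := Submodule.exists_isCompl (Submodule.span K (Set.range v))
  refine ⟨_, basisSumOfIsCompl hQ (Basis.span hv) (finBasis K Q), funext fun i ↦ ?_⟩
  rw [comp_apply, basisSumOfIsCompl_inl, Basis.span_apply]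

theorem exists_dual_bases_of_basis_ker [FiniteDimensional K E] (B : E →ₗ[K] O →ₗ[K] K)
    (bE₀ : Basis ι K (LinearMap.ker B)) (bO₀ : Basis κ K (LinearMap.ker B.flip)) :
    ∃ (bE : Basis (Fin (finrank K (LinearMap.range B)) ⊕ ι) K E)
      (bO : Basis (Fin (finrank K (LinearMap.range B)) ⊕ κ) K O),
      (∀ i, bE (Sum.inr i) = bE₀ i) ∧ (∀ j, bO (Sum.inr j) = bO₀ j) ∧
      ∀ i j, B (bE (Sum.inl i)) (bO (Sum.inl j)) = if i = j then 1 else 0 := by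
  obtain ⟨C, hC⟩ := Submodule.exists_isCompl (LinearMap.ker B)
  obtain ⟨D, hD⟩ := Submodule.exists_isCompl (LinearMap.ker B.flip)
  have finrank_C : finrank K C = finrank K (LinearMap.range B) := by
    have := Submodule.finrank_add_eq_of_isCompl hC
    have := B.finrank_range_add_finrank_ker
    lia
  have := isPerfPair_domRestrict₁₂ hC.symm hD.symm
  let bC := finBasisOfFinrankEq K C finrank_C
  let bD := bC.dualBasis.map (B.domRestrict₁₂ C D).flip.toPerfPair.symm
  refine ⟨basisSumOfIsCompl hC.symm bC bE₀, basisSumOfIsCompl hD.symm bD bO₀,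
    basisSumOfIsCompl_inr _ _ _, basisSumOfIsCompl_inr _ _ _, fun i j ↦ ?_⟩
  calc B (basisSumOfIsCompl hC.symm bC bE₀ (Sum.inl i))
        (basisSumOfIsCompl hD.symm bD bO₀ (Sum.inl j))
      = B.domRestrict₁₂ C D (bC i) (bD j) := by
        rw [basisSumOfIsCompl_inl, basisSumOfIsCompl_inl, LinearMap.domRestrict₁₂_apply]
    _ = bC.dualBasis j (bC i) := LinearMap.apply_toPerfPair_flip _ _ _
    _ = if i = j then 1 else 0 := by rw [Basis.dualBasis_apply_self]

theorem exists_eq_smul_of_mem_span_singleton {β : E →ₗ[K] O →ₗ[K] V} {z : V} (hz : z ≠ 0)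
    (hβ : ∀ x y, β x y ∈ K ∙ z) : ∃ B : E →ₗ[K] O →ₗ[K] K, ∀ x y, β x y = B x y • z := by
  obtain ⟨f, hf⟩ := Projective.exists_dual_eq_one K hz
  refine ⟨β.compr₂ f, fun x y ↦ ?_⟩
  obtain ⟨c, hc⟩ := Submodule.mem_span_singleton.1 (hβ x y)
  rw [LinearMap.compr₂_apply, ← hc, map_smul, hf, smul_eq_mul, mul_one]

end LinearAlgebra

namespace SuperLie

variable {K : Type} [Field K] {A : SuperLie K} {x y z : A.carrier}

theorem mem_evenPart_iff : x ∈ A.evenPart ↔ A.J x = x := by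
  simp [evenPart, sub_eq_zero]

theorem mem_oddPart_iff : x ∈ A.oddPart ↔ A.J x = -x := by
  simp [oddPart, add_eq_zero_iff_eq_neg]

theorem mem_center_iff : x ∈ A.center ↔ ∀ y, A.br x y = 0 := by
  simp [center]

theorem isCompl_evenPart_oddPart (h2 : (2 : K) ≠ 0) (A : SuperLie K) :
    IsCompl A.evenPart A.oddPart :=
  have := invertibleOfNonzero h2
  isCompl_ker_sub_id_ker_add_id A.J_inv

theorem br_mem_derived (x y : A.carrier) : A.br x y ∈ A.derived :=
  Submodule.subset_span ⟨x, y, rfl⟩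

theorem br_mem_evenPart_of_even (hx : x ∈ A.evenPart) (hy : y ∈ A.evenPart) :
    A.br x y ∈ A.evenPart := by
  rw [mem_evenPart_iff] at *
  rw [A.J_br, hx, hy]

theorem br_mem_evenPart_of_odd (hx : x ∈ A.oddPart) (hy : y ∈ A.oddPart) :
    A.br x y ∈ A.evenPart := by
  rw [mem_oddPart_iff] at hx hy
  rw [mem_evenPart_iff, A.J_br, hx, hy, map_neg, map_neg, LinearMap.neg_apply, neg_neg]

theorem br_eq_neg_br_of_even (hy : y ∈ A.evenPart) : A.br x y = -A.br y x := by
  rw [A.skew_e y x (mem_evenPart_iff.1 hy), neg_neg]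

theorem IsNilpotent.br_eq_zero_of_mem_span_singleton (hA : A.IsNilpotent)
    (h : A.br x y ∈ K ∙ x) : A.br x y = 0 := by
  obtain ⟨c, hc⟩ := Submodule.mem_span_singleton.1 h
  obtain rfl | hc0 := eq_or_ne c 0
  · rw [← hc, zero_smul]
  have mem_lcs (k : ℕ) : x ∈ A.lcs k := by
    induction k with
    | zero => exact Submodule.mem_top
    | succ k ih =>
      have : c • x ∈ A.lcs (k + 1) := hc ▸ Submodule.subset_span ⟨x, ih, y, rfl⟩
      exact (Submodule.smul_mem_iff _ hc0).1 this
  obtain ⟨k, hk⟩ := hA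
  have hx : x = 0 := (Submodule.mem_bot K).1 (hk ▸ mem_lcs k)
  rw [hx, map_zero, LinearMap.zero_apply]

theorem IsNilpotent.mem_center_of_derived_le_span (hA : A.IsNilpotent)
    (hz : A.derived ≤ K ∙ z) : z ∈ A.center :=
  mem_center_iff.2 fun y ↦ hA.br_eq_zero_of_mem_span_singleton (hz (br_mem_derived z y))

section DerivedOdd

variable (h2 : (2 : K) ≠ 0) (hodd : A.derived ≤ A.oddPart)
include h2 hodd

theorem br_eq_zero_of_even (hx : x ∈ A.evenPart) (hy : y ∈ A.evenPart) : A.br x y = 0 :=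
  Submodule.disjoint_def.1 (isCompl_evenPart_oddPart h2 A).disjoint _
    (br_mem_evenPart_of_even hx hy) (hodd (br_mem_derived x y))

theorem br_eq_zero_of_odd (hx : x ∈ A.oddPart) (hy : y ∈ A.oddPart) : A.br x y = 0 :=
  Submodule.disjoint_def.1 (isCompl_evenPart_oddPart h2 A).disjoint _
    (br_mem_evenPart_of_odd hx hy) (hodd (br_mem_derived x y))

theorem mem_center_iff_of_even (e : A.evenPart) :
    (e : A.carrier) ∈ A.center ↔ ∀ o : A.oddPart, A.br e o = 0 := by
  refine ⟨fun h o ↦ mem_center_iff.1 h o, fun h ↦ mem_center_iff.2 fun w ↦ ?_⟩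
  obtain ⟨e', o, he', ho, rfl⟩ :=
    Submodule.codisjoint_iff_exists_add_eq.1 (isCompl_evenPart_oddPart h2 A).codisjoint w
  rw [map_add, br_eq_zero_of_even h2 hodd e.2 he', h ⟨o, ho⟩, add_zero]

theorem mem_center_iff_of_odd (o : A.oddPart) :
    (o : A.carrier) ∈ A.center ↔ ∀ e : A.evenPart, A.br e o = 0 := by
  refine ⟨fun h e ↦ ?_, fun h ↦ mem_center_iff.2 fun w ↦ ?_⟩
  · rw [← neg_eq_zero, ← br_eq_neg_br_of_even e.2, mem_center_iff.1 h]
  · obtain ⟨e, o', he, ho', rfl⟩ :=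
      Submodule.codisjoint_iff_exists_add_eq.1 (isCompl_evenPart_oddPart h2 A).codisjoint w
    rw [map_add, br_eq_zero_of_odd h2 hodd o.2 ho', br_eq_neg_br_of_even he, h ⟨e, he⟩, neg_zero,
      add_zero]

theorem derived_eq_bot_of_br_even_odd_eq_zero
    (h : ∀ (e : A.evenPart) (o : A.oddPart), A.br e o = 0) : A.derived = ⊥ := by
  have center_eq_top : A.center = ⊤ := by
    rw [eq_top_iff, ← (isCompl_evenPart_oddPart h2 A).sup_eq_top]
    exact sup_le (fun e he ↦ (mem_center_iff_of_even h2 hodd ⟨e, he⟩).2 (h _))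
      fun o ho ↦ (mem_center_iff_of_odd h2 hodd ⟨o, ho⟩).2 fun e ↦ h e _
  rw [derived, Submodule.span_eq_bot]
  rintro _ ⟨x, y, rfl⟩
  exact mem_center_iff.1 (center_eq_top ▸ Submodule.mem_top) y

theorem isHeisOddSum_of_basis {p a b : ℕ} (bE : Basis (Fin p ⊕ Fin a) K A.evenPart)
    (bO : Basis (Fin p ⊕ (Fin 1 ⊕ Fin b)) K A.oddPart)
    (hbE : ∀ i, (bE (Sum.inr i) : A.carrier) ∈ A.center)
    (hbO : ∀ j, (bO (Sum.inr j) : A.carrier) ∈ A.center)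
    (hbr : ∀ i j, A.br (bE (Sum.inl i)) (bO (Sum.inl j)) =
      if i = j then (bO (Sum.inr (Sum.inl 0)) : A.carrier) else 0) :
    A.IsHeisOddSum p a b := by
  let e : (Fin p ⊕ Fin a) ⊕ (Fin p ⊕ (Fin 1 ⊕ Fin b)) ≃
      Fin p ⊕ (Fin p ⊕ (Fin 1 ⊕ (Fin a ⊕ Fin b))) :=
    { toFun := Sum.elim (Sum.elim .inl (.inr ∘ .inr ∘ .inr ∘ .inl))
        (Sum.elim (.inr ∘ .inl) (Sum.elim (.inr ∘ .inr ∘ .inl) (.inr ∘ .inr ∘ .inr ∘ .inr)))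
      invFun := Sum.elim (.inl ∘ .inl) (Sum.elim (.inr ∘ .inl) (Sum.elim (.inr ∘ .inr ∘ .inl)
        (Sum.elim (.inl ∘ .inr) (.inr ∘ .inr ∘ .inr))))
      left_inv := by rintro ((_ | _) | (_ | _ | _)) <;> rfl
      right_inv := by rintro (_ | _ | _ | _ | _) <;> rfl }
  let bA := (basisSumOfIsCompl (isCompl_evenPart_oddPart h2 A) bE bO).reindex e
  have coe_bA : ⇑bA = Sum.elim (fun i ↦ (bE (Sum.inl i) : A.carrier))
      (Sum.elim (fun i ↦ (bO (Sum.inl i) : A.carrier))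
      (Sum.elim (fun _ : Fin 1 ↦ (bO (Sum.inr (Sum.inl 0)) : A.carrier))
      (Sum.elim (fun i ↦ (bE (Sum.inr i) : A.carrier))
        fun j ↦ (bO (Sum.inr (Sum.inr j)) : A.carrier)))) := by
    funext t
    rcases t with i | i | i | i | i <;>
      simp [bA, e, Subsingleton.elim _ (0 : Fin 1)]
  exact ⟨_, _, _, _, _, fun i ↦ (bE _).2, fun j ↦ (bO _).2, (bO _).2, fun i ↦ (bE _).2,
    fun j ↦ (bO _).2, coe_bA ▸ bA.linearIndependent, coe_bA ▸ bA.span_eq,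
    fun i j ↦ br_eq_zero_of_even h2 hodd (bE _).2 (bE _).2,
    fun i j ↦ br_eq_zero_of_odd h2 hodd (bO _).2 (bO _).2, hbr, hbO _, hbE, fun j ↦ hbO _⟩

theorem exists_isHeisOddSum_of_br_eq_smul [FiniteDimensional K A.carrier] {z : A.oddPart}
    (hz : z ≠ 0) (hzc : (z : A.carrier) ∈ A.center) {B : A.evenPart →ₗ[K] A.oddPart →ₗ[K] K}
    (hB : ∀ (e : A.evenPart) (o : A.oddPart), A.br e o = B e o • (z : A.carrier)) :
    ∃ a b : ℕ, finrank K A.evenPart = finrank K (LinearMap.range B) + a ∧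
      finrank K A.oddPart = finrank K (LinearMap.range B) + 1 + b ∧
      A.IsHeisOddSum (finrank K (LinearMap.range B)) a b := by
  have mem_ker (e : A.evenPart) : (e : A.carrier) ∈ A.center ↔ e ∈ LinearMap.ker B := by
    simp only [mem_center_iff_of_even h2 hodd, hB, smul_eq_zero, ZeroMemClass.coe_eq_zero, hz,
      or_false, LinearMap.mem_ker, LinearMap.ext_iff, LinearMap.zero_apply]
  have mem_ker_flip (o : A.oddPart) : (o : A.carrier) ∈ A.center ↔ o ∈ LinearMap.ker B.flip := by
    simp only [mem_center_iff_of_odd h2 hodd, hB, smul_eq_zero, ZeroMemClass.coe_eq_zero, hz,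
      or_false, LinearMap.mem_ker, LinearMap.ext_iff, LinearMap.flip_apply, LinearMap.zero_apply]
  let z' : LinearMap.ker B.flip := ⟨z, (mem_ker_flip z).1 hzc⟩
  have z'_ne_zero : z' ≠ 0 := fun h ↦ hz (congrArg Subtype.val h)
  obtain ⟨b, bO₀, hbO₀⟩ := exists_basis_sum_of_linearIndependent
    (LinearIndependent.of_subsingleton (R := K) (v := fun _ : Fin 1 ↦ z') 0 z'_ne_zero)
  obtain ⟨bE, bO, hbE, hbO, hbr⟩ :=
    exists_dual_bases_of_basis_ker B (finBasis K (LinearMap.ker B)) bO₀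
  have bO_eq_z : bO (Sum.inr (Sum.inl 0)) = z := by
    rw [hbO]
    exact congrArg Subtype.val (congrFun hbO₀ 0)
  refine ⟨_, b, by simp [finrank_eq_card_basis bE], by simp [finrank_eq_card_basis bO, add_assoc],
    isHeisOddSum_of_basis h2 hodd bE bO (fun i ↦ (mem_ker _).2 ?_)
      (fun j ↦ (mem_ker_flip _).2 ?_) fun i j ↦ ?_⟩
  · exact hbE i ▸ Subtype.prop _
  · exact hbO j ▸ Subtype.prop _
  · rw [hB, hbr, bO_eq_z, ite_smul, one_smul, zero_smul]

end DerivedOdd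

end SuperLie

theorem stmt11_general {K : Type} [Field K] (h2 : (2 : K) ≠ 0)
    (A : SuperLie K) [FiniteDimensional K A.carrier] (hnil : A.IsNilpotent)
    (m n : ℕ) (hm : m = finrank K A.evenPart) (hn : n = finrank K A.oddPart)
    (hd : finrank K A.derived = 1) (hdo : A.derived ≤ A.oddPart) :
    ∃ p a b : ℕ, 1 ≤ p ∧ m = p + a ∧ n = p + 1 + b ∧
      A.IsHeisOddSum p a b := by
  obtain ⟨⟨z, hzd⟩, hz0, hspan⟩ := finrank_eq_one_iff'.1 hd
  have derived_le_span : A.derived ≤ K ∙ z := fun w hw ↦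
    Submodule.mem_span_singleton.2 ((hspan ⟨w, hw⟩).imp fun _ ↦ congrArg Subtype.val)
  replace hz0 : z ≠ 0 := fun h ↦ hz0 (Subtype.ext h)
  obtain ⟨B, hB⟩ := exists_eq_smul_of_mem_span_singleton hz0
    (β := A.br.domRestrict₁₂ A.evenPart A.oddPart) fun e o ↦
      derived_le_span (br_mem_derived (e : A.carrier) o)
  have B_ne_zero : B ≠ 0 := by
    rintro rfl
    have : A.derived = ⊥ := derived_eq_bot_of_br_even_odd_eq_zero h2 hdo fun e o ↦
      (hB e o).trans (zero_smul K z)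
    exact hz0 ((Submodule.mem_bot K).1 (this ▸ hzd))
  have rank_pos : 1 ≤ finrank K (LinearMap.range B) :=
    Submodule.one_le_finrank_iff.2 (LinearMap.range_eq_bot.not.2 B_ne_zero)
  obtain ⟨a, b, ha, hb, hsum⟩ := exists_isHeisOddSum_of_br_eq_smul h2 hdo (z := ⟨z, hdo hzd⟩)
    (fun h ↦ hz0 (congrArg Subtype.val h)) (hnil.mem_center_of_derived_le_span derived_le_span) hB
  exact ⟨_, a, b, rank_pos, hm.trans ha, hn.trans hb, hsum⟩

/-- A nilpotent Lie superalgebra of dimension `(m|n)` with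
`dim L' = (0|1)` is isomorphic to `H_p ⊕ A(m-p | n-p-1)` for some `p ≥ 1`. -/
theorem stmt11 {K : Type} [Field K] (h2 : (2 : K) ≠ 0) (h3 : (3 : K) ≠ 0)
    (A : SuperLie K) [FiniteDimensional K A.carrier] (hnil : A.IsNilpotent)
    (m n : ℕ) (hm : m = finrank K A.evenPart) (hn : n = finrank K A.oddPart)
    (hd : finrank K A.derived = 1) (hdo : A.derived ≤ A.oddPart) :
    ∃ p a b : ℕ, 1 ≤ p ∧ m = p + a ∧ n = p + 1 + b ∧
      A.IsHeisOddSum p a b := by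
  exact stmt11_general h2 A hnil m n hm hn hd hdo
end
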